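/- Let G₀ be a connected cubic pseudo-graph, and let G be obtained from G₀ by subdividing each edge e exactly k(e) times, with k(e) ≥ 1 for loops and k(e) ≥ 2 for non-loop edges. Then the maximum matching of G satisfies ν₁(G) ≥ (3/7)·|V(G)|. -/

import Mathlib

structure Multigraph where
  V : Type
  E : Type
  fintypeV : Fintype V
  decEqV : DecidableEq V
  fintypeE : Fintype E
  decEqE : DecidableEq E
  ends : E → Sym2 V

attribute [instance] Multigraph.fintypeV Multigraph.decEqV Multigraph.fintypeE Multigraph.decEqE

namespace Multigraph

/-- `e` is a loop if both of its endpoints coincide. -/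
def IsLoop (G : Multigraph) (e : G.E) : Prop := (G.ends e).IsDiag

/-- A loopless multigraph. -/
def Loopless (G : Multigraph) : Prop := ∀ e, ¬ G.IsLoop e

/-- Degree of a vertex: loops count twice. -/
def deg (G : Multigraph) (v : G.V) : ℕ :=
  ∑ e : G.E, (if G.ends e = Sym2.diag v then 2 else if v ∈ G.ends e then 1 else 0)

/-- Adjacency via some edge. -/
def Adj (G : Multigraph) (u v : G.V) : Prop := ∃ e, G.ends e = s(u, v)

/-- Connectivity. -/
def Connected (G : Multigraph) : Prop := ∀ u v : G.V, Relation.ReflTransGen G.Adj u v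

/-- A matching: a set of non-loop edges no two of which share an endpoint. -/
def IsMatching (G : Multigraph) (M : Finset G.E) : Prop :=
  (∀ e ∈ M, ¬ G.IsLoop e) ∧
  ∀ e ∈ M, ∀ f ∈ M, e ≠ f → ∀ v : G.V, v ∈ G.ends e → v ∉ G.ends f

/-- A maximum matching. -/
def IsMaximumMatching (G : Multigraph) (M : Finset G.E) : Prop :=
  G.IsMatching M ∧ ∀ M' : Finset G.E, G.IsMatching M' → M'.card ≤ M.card

/-- `v` is saturated by `M`. -/
def Saturated (G : Multigraph) (M : Finset G.E) (v : G.V) : Prop :=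
  ∃ e ∈ M, v ∈ G.ends e

/-- Size of a maximum matching. -/
noncomputable def nu1 (G : Multigraph) : ℕ :=
  sSup {m | ∃ M : Finset G.E, G.IsMatching M ∧ M.card = m}

/-- Max number of edges coverable by two disjoint matchings. -/
noncomputable def nu2 (G : Multigraph) : ℕ :=
  sSup {m | ∃ H H' : Finset G.E, G.IsMatching H ∧ G.IsMatching H' ∧
    Disjoint H H' ∧ H.card + H'.card = m}

/-- Max number of edges coverable by three pairwise disjoint matchings. -/
noncomputable def nu3 (G : Multigraph) : ℕ :=
  sSup {m | ∃ H₁ H₂ H₃ : Finset G.E, G.IsMatching H₁ ∧ G.IsMatching H₂ ∧ G.IsMatching H₃ ∧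
    Disjoint H₁ H₂ ∧ Disjoint H₁ H₃ ∧ Disjoint H₂ H₃ ∧ H₁.card + H₂.card + H₃.card = m}

/-- Subdividing the edge `e`, with endpoints `u`, `v`, once: replace it by a path `u - w - v`
through a new vertex `w`. -/
def subdivideOnce (G : Multigraph) (e : G.E) (u v : G.V) : Multigraph where
  V := G.V ⊕ Unit
  E := {f : G.E // f ≠ e} ⊕ Bool
  fintypeV := inferInstance
  decEqV := inferInstance
  fintypeE := inferInstance
  decEqE := inferInstance
  ends := fun f =>
    match f with
    | Sum.inl ⟨f, _⟩ => (G.ends f).map Sum.inl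
    | Sum.inr true => s(Sum.inl u, Sum.inr ())
    | Sum.inr false => s(Sum.inl v, Sum.inr ())

/-- Subdividing every edge `e` exactly `k e` times, where `fst`/`snd` pick out the endpoints
of every edge. The edge `e` is replaced by the path
`fst e, (e,0), (e,1), …, (e, k e - 1), snd e` of length `k e + 1`. -/
def subdivide (G : Multigraph) (fst snd : G.E → G.V) (k : G.E → ℕ) : Multigraph where
  V := G.V ⊕ (Σ e : G.E, Fin (k e))
  E := Σ e : G.E, Fin (k e + 1)
  fintypeV := inferInstance
  decEqV := inferInstance
  fintypeE := inferInstance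
  decEqE := inferInstance
  ends := fun f =>
    s( if h : f.2.val = 0 then Sum.inl (fst f.1)
       else Sum.inr ⟨f.1, ⟨f.2.val - 1, by omega⟩⟩,
       if h : f.2.val = k f.1 then Sum.inl (snd f.1)
       else Sum.inr ⟨f.1, ⟨f.2.val, by have := f.2.isLt; omega⟩⟩ )

/-!
Choose for every vertex `v` of the cubic graph an incident edge `σ v`, and match `v` to its
neighbour on the path replacing `σ v`. If `t` vertices choose the edge `e`, a path on `k e + t`
vertices remains to be matched for `e`, so exactly one vertex is missed if `k e + t` is odd, and
none otherwise. Call `e` exposed in the first case. With `n` vertices in total, it suffices to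
find `σ` with at most `n / 7` exposed edges.

Moving `v` from `σ v` to another incident edge changes the parity of exactly these two edges.
Take `σ` with the fewest exposed edges, loops counted twice. Then no loop is exposed, and no one or
two moves cover two exposed edges at once. Now let every original vertex give its unit of weight to
its incident edges: it pays `2` to each exposed edge it did not choose, collects `2 / t` from each
other incident edge if its own choice is exposed and was made by `t` vertices, and passes the
balance to `σ v`. Together with the `k e` vertices subdividing it, every edge ends up with a
nonnegative weight, and every exposed edge with at least `7`.
-/

section

open Finset symmDiff

variable {G : Multigraph}

instance (G : Multigraph) : DecidablePred G.IsLoop :=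
  fun e => inferInstanceAs (Decidable (G.ends e).IsDiag)

theorem isLoop_iff_of_ends_eq {e : G.E} {u w : G.V} (h : G.ends e = s(u, w)) :
    G.IsLoop e ↔ u = w := by
  rw [IsLoop, h, Sym2.mk_isDiag_iff]

/-! ### Incidence and degrees -/

/-- The edges with `v` as an endpoint; a loop at `v` occurs once. -/
def incidentEdges (G : Multigraph) (v : G.V) : Finset G.E := {e | v ∈ G.ends e}

@[simp]
theorem mem_incidentEdges {v : G.V} {e : G.E} : e ∈ G.incidentEdges v ↔ v ∈ G.ends e := by
  simp [incidentEdges]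

theorem ends_eq_diag_iff {e : G.E} {v : G.V} :
    G.ends e = Sym2.diag v ↔ v ∈ G.ends e ∧ G.IsLoop e := by
  rw [IsLoop]
  induction G.ends e with
  | h x y => simp only [Sym2.diag, Sym2.eq_iff, Sym2.mem_iff, Sym2.mk_isDiag_iff]; grind

theorem deg_eq_card_add_card_loops (v : G.V) :
    G.deg v = #(G.incidentEdges v) + #{e ∈ G.incidentEdges v | G.IsLoop e} := by
  simp only [deg, incidentEdges, filter_filter, card_filter, ← sum_add_distrib, ends_eq_diag_iff]
  exact sum_congr rfl fun e _ => by split_ifs <;> grind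

theorem card_incidentEdges_le_deg (v : G.V) : #(G.incidentEdges v) ≤ G.deg v := by
  rw [deg_eq_card_add_card_loops]
  exact Nat.le_add_right _ _

theorem deg_le_two_mul_card_incidentEdges (v : G.V) : G.deg v ≤ 2 * #(G.incidentEdges v) := by
  have := card_filter_le (G.incidentEdges v) (G.IsLoop ·)
  rw [deg_eq_card_add_card_loops]
  omega

theorem card_incidentEdges_lt_deg_of_isLoop {v : G.V} {e : G.E} (hv : v ∈ G.ends e)
    (he : G.IsLoop e) : #(G.incidentEdges v) < G.deg v := by
  rw [deg_eq_card_add_card_loops]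
  exact Nat.lt_add_of_pos_right (card_pos.2 ⟨e, by simp [hv, he]⟩)

theorem not_isLoop_of_ne {v : G.V} (hdeg : G.deg v ≤ 3) {e f : G.E} (he : v ∈ G.ends e)
    (hf : v ∈ G.ends f) (hfe : f ≠ e) (heloop : G.IsLoop e) : ¬ G.IsLoop f := fun hfloop => by
  have hloops : 1 < #{e ∈ G.incidentEdges v | G.IsLoop e} :=
    one_lt_card.2 ⟨f, by simp [hf, hfloop], e, by simp [he, heloop], hfe⟩
  have hle := card_filter_le (G.incidentEdges v) (G.IsLoop ·)
  rw [deg_eq_card_add_card_loops] at hdeg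
  omega

/-! ### Selectors -/

/-- A selector chooses an incident edge `σ v` for every vertex `v`: in the subdivided graph, `v` is
to be matched to its neighbour on the path replacing `σ v`. -/
def IsSelector (G : Multigraph) (σ : G.V → G.E) : Prop := ∀ v, v ∈ G.ends (σ v)

/-- The number of vertices choosing the edge `e`; a vertex with a chosen loop counts once. -/
def load (σ : G.V → G.E) (e : G.E) : ℕ := #{v | σ v = e}

theorem IsSelector.update {σ : G.V → G.E} (hσ : G.IsSelector σ) {v : G.V} {e : G.E}
    (he : v ∈ G.ends e) : G.IsSelector (Function.update σ v e) := by
  intro w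
  obtain rfl | hw := eq_or_ne w v
  · rwa [Function.update_self]
  · rw [Function.update_of_ne hw]
    exact hσ w

theorem exists_isSelector (hdeg : ∀ v, G.deg v ≠ 0) : ∃ σ, G.IsSelector σ := by
  have h : ∀ v, ∃ e, v ∈ G.ends e := fun v => by
    have := deg_le_two_mul_card_incidentEdges v
    obtain ⟨e, he⟩ := card_pos.1 (show 0 < #(G.incidentEdges v) by have := hdeg v; omega)
    exact ⟨e, mem_incidentEdges.1 he⟩
  choose σ hσ using h
  exact ⟨σ, hσ⟩

theorem sum_load (σ : G.V → G.E) : ∑ e, load σ e = Fintype.card G.V :=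
  (card_eq_sum_card_fiberwise fun v _ => mem_univ (σ v)).symm

theorem load_eq_of_ends_eq {σ : G.V → G.E} (hσ : G.IsSelector σ) {e : G.E} {u w : G.V}
    (h : G.ends e = s(u, w)) :
    load σ e = (if σ u = e then 1 else 0) + (if u ≠ w ∧ σ w = e then 1 else 0) := by
  have hsub : ({v | σ v = e} : Finset G.V) =
      {v ∈ ({u, w} : Finset G.V) | σ v = e} := by
    ext v
    have := hσ v
    grind
  rw [load, hsub, card_filter]
  obtain rfl | huw := eq_or_ne u w
  · simp only [pair_eq_singleton, sum_singleton, ne_eq, not_true_eq_false, false_and, if_false,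
      add_zero]
  · simp [sum_pair huw, huw]

theorem load_update_add (σ : G.V → G.E) (v : G.V) (e f : G.E) :
    load (Function.update σ v e) f + (if σ v = f then 1 else 0) =
      load σ f + (if e = f then 1 else 0) := by
  simp only [load, card_filter]
  rw [← add_sum_erase _ _ (mem_univ v), ← add_sum_erase _ (fun w => if σ w = f then 1 else 0)
    (mem_univ v), Function.update_self, sum_congr rfl fun w hw => by
      rw [Function.update_of_ne (ne_of_mem_erase hw)]]
  omega

/-- The edges whose path in the subdivided graph, extended by the endpoints choosing it, has an odd
number of vertices, so that matching this path leaves a vertex uncovered. -/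
def exposed (k : G.E → ℕ) (σ : G.V → G.E) : Finset G.E := {e | Odd (k e + load σ e)}

variable {k : G.E → ℕ} {σ : G.V → G.E}

theorem mem_exposed {e : G.E} : e ∈ exposed k σ ↔ Odd (k e + load σ e) := by
  simp [exposed]

theorem exposed_update (k : G.E → ℕ) (σ : G.V → G.E) (v : G.V) (e : G.E) :
    exposed k (Function.update σ v e) = exposed k σ ∆ {σ v} ∆ {e} := by
  ext f
  have := load_update_add σ v e f
  simp only [mem_symmDiff, mem_exposed, mem_singleton, Nat.odd_iff]
  split_ifs at this <;> grind

/-- The quantity minimised by the discharging argument: the number of exposed edges, where exposed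
loops count twice so that replacing an exposed loop by another exposed edge is an improvement. -/
def penalty (k : G.E → ℕ) (σ : G.V → G.E) : ℕ :=
  #(exposed k σ) + #{e ∈ exposed k σ | G.IsLoop e}

/-- A selector of least penalty; a few exchanges that would lower the penalty give the structure
needed to discharge. -/
def IsOptimal (k : G.E → ℕ) (σ : G.V → G.E) : Prop := MinimalFor G.IsSelector (penalty k) σ

theorem exists_isOptimal (k : G.E → ℕ) (hdeg : ∀ v, G.deg v ≠ 0) : ∃ σ, IsOptimal k σ :=
  exists_minimalFor_of_wellFoundedLT _ _ (exists_isSelector hdeg)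

namespace IsOptimal

theorem not_exposed_ssubset (hσ : IsOptimal k σ) {τ : G.V → G.E} (hτ : G.IsSelector τ) :
    ¬ exposed k τ ⊂ exposed k σ := fun h => by
  have hcard := card_lt_card h
  have hloops := card_le_card (filter_subset_filter (G.IsLoop ·) h.subset)
  have := hσ.le hτ
  simp only [penalty] at this
  omega

theorem eq_of_exposed_eq (hσ : IsOptimal k σ) {τ : G.V → G.E} (hτ : G.IsSelector τ) {x y : G.E}
    (hx : x ∈ exposed k σ) (hy : y ∈ exposed k σ) (h : exposed k τ = exposed k σ ∆ {x} ∆ {y}) :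
    x = y := by
  by_contra hxy
  refine hσ.not_exposed_ssubset hτ ((ssubset_iff_of_subset fun z hz => ?_).2 ⟨x, hx, ?_⟩) <;>
    simp only [h, mem_symmDiff, mem_singleton] at * <;> grind

theorem eq_choice_of_mem_exposed (hσ : IsOptimal k σ) {v : G.V} {e : G.E} (hv : v ∈ G.ends e)
    (he : e ∈ exposed k σ) (hσv : σ v ∈ exposed k σ) : e = σ v :=
  (hσ.eq_of_exposed_eq (hσ.prop.update hv) hσv he (exposed_update k σ v e)).symm

theorem eq_of_two_moves (hσ : IsOptimal k σ) {v w : G.V} (hvw : v ≠ w) {e f x y : G.E}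
    (he : v ∈ G.ends e) (hf : w ∈ G.ends f) (hx : x ∈ exposed k σ) (hy : y ∈ exposed k σ)
    (h : ({σ v} ∆ {e} ∆ {σ w} ∆ {f} : Finset G.E) = {x} ∆ {y}) : x = y := by
  refine hσ.eq_of_exposed_eq ((hσ.prop.update he).update hf) hx hy ?_
  rw [exposed_update, exposed_update, Function.update_of_ne hvw.symm,
    symmDiff_assoc (exposed k σ) {x} {y}, ← h]
  simp only [symmDiff_assoc]

theorem not_isLoop_of_mem_exposed (hσ : IsOptimal k σ) (hdeg : ∀ v, G.deg v = 3) {e : G.E}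
    (he : e ∈ exposed k σ) : ¬ G.IsLoop e := fun hloop => by
  obtain ⟨v, hv⟩ : ∃ v, v ∈ G.ends e := ⟨_, (G.ends e).out_fst_mem⟩
  obtain ⟨f, hvf, hfe, τ, hτ, hexp⟩ : ∃ f, v ∈ G.ends f ∧ f ≠ e ∧
      ∃ τ, G.IsSelector τ ∧ exposed k τ = exposed k σ ∆ {e} ∆ {f} := by
    by_cases hσv : σ v = e
    · obtain ⟨f, hf, hfe⟩ := exists_mem_ne (s := G.incidentEdges v) (by
        have := deg_le_two_mul_card_incidentEdges v
        have := hdeg v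
        omega) e
      rw [mem_incidentEdges] at hf
      exact ⟨f, hf, hfe, _, hσ.prop.update hf, hσv ▸ exposed_update k σ v f⟩
    · exact ⟨σ v, hσ.prop v, hσv, _, hσ.prop.update hv,
        (exposed_update k σ v e).trans (symmDiff_right_comm _ _ _)⟩
  have hf : ¬ G.IsLoop f := not_isLoop_of_ne (hdeg v).le hv hvf hfe hloop
  refine (hσ.le hτ).not_gt (add_lt_add_of_le_of_lt ?_ (card_lt_card ?_))
  · calc #(exposed k τ) ≤ #(insert f ((exposed k σ).erase e)) := card_le_card fun x hx => by
          simp only [hexp, mem_symmDiff, mem_singleton] at hx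
          grind
      _ ≤ #((exposed k σ).erase e) + 1 := card_insert_le _ _
      _ = #(exposed k σ) := card_erase_add_one he
  · refine (ssubset_iff_of_subset fun x hx => ?_).2 ⟨e, by simp [he, hloop], ?_⟩ <;>
      simp only [hexp, mem_filter, mem_symmDiff, mem_singleton] at * <;> grind

end IsOptimal

/-! ### Discharging -/

/-- The weight paid by `v` to an incident edge `e` other than `σ v`. The factor `3 - load` is
`2 / load`, as an exposed edge `σ v` has load `1` or `2`. -/
def toll (k : G.E → ℕ) (σ : G.V → G.E) (e : G.E) (v : G.V) : ℤ :=
  (if e ∈ exposed k σ then 2 else 0) - if σ v ∈ exposed k σ then 3 - (load σ (σ v) : ℤ) else 0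

/-- The weight paid by `v` to an incident edge `e`: the toll if `v` does not choose `e`; otherwise
what is left of the unit weight of `v` after paying all tolls. -/
def payment (k : G.E → ℕ) (σ : G.V → G.E) (e : G.E) (v : G.V) : ℤ :=
  if e = σ v then 1 - ∑ f ∈ (G.incidentEdges v).erase (σ v), toll k σ f v else toll k σ e v

theorem sum_payment_incidentEdges (k : G.E → ℕ) (hσ : G.IsSelector σ) (v : G.V) :
    ∑ e ∈ G.incidentEdges v, payment k σ e v = 1 := by
  have htoll : ∑ e ∈ (G.incidentEdges v).erase (σ v), payment k σ e v =
      ∑ e ∈ (G.incidentEdges v).erase (σ v), toll k σ e v :=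
    sum_congr rfl fun e he => if_neg (ne_of_mem_erase he)
  rw [← add_sum_erase _ _ (mem_incidentEdges.2 (hσ v)), htoll, payment, if_pos rfl,
    sub_add_cancel]

/-- The weight of the path replacing `e` after all payments: one unit for each of its `k e` inner
vertices, and the payments of the endpoints of `e`. -/
def weight (k : G.E → ℕ) (σ : G.V → G.E) (e : G.E) : ℤ :=
  k e + ∑ v with v ∈ G.ends e, payment k σ e v

theorem sum_weight (k : G.E → ℕ) (hσ : G.IsSelector σ) :
    ∑ e, weight k σ e = Fintype.card G.V + ∑ e, (k e : ℤ) := by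
  have hpay : ∑ e, ∑ v with v ∈ G.ends e, payment k σ e v = Fintype.card G.V := by
    calc ∑ e, ∑ v with v ∈ G.ends e, payment k σ e v
        = ∑ v, ∑ e ∈ G.incidentEdges v, payment k σ e v := sum_comm' (by simp)
      _ = Fintype.card G.V := by simp [sum_payment_incidentEdges k hσ]
  simp only [weight, sum_add_distrib, hpay, add_comm]

theorem weight_of_ends_eq_of_ne (k : G.E → ℕ) (σ : G.V → G.E) {e : G.E} {u w : G.V}
    (hends : G.ends e = s(u, w)) (huw : u ≠ w) :
    weight k σ e = k e + (payment k σ e u + payment k σ e w) := by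
  have hvs : ({v | v ∈ G.ends e} : Finset G.V) = {u, w} := by ext; simp [hends]
  rw [weight, hvs, sum_pair huw]

theorem weight_of_ends_eq_diag (k : G.E → ℕ) (σ : G.V → G.E) {e : G.E} {u : G.V}
    (hends : G.ends e = s(u, u)) : weight k σ e = k e + payment k σ e u := by
  have hvs : ({v | v ∈ G.ends e} : Finset G.V) = {u} := by ext; simp [hends]
  rw [weight, hvs, sum_singleton]

theorem one_le_load_choice (σ : G.V → G.E) (v : G.V) : 1 ≤ load σ (σ v) :=
  card_pos.2 ⟨v, by simp⟩

theorem two_le_load_choice {u w : G.V} (huw : u ≠ w) (h : σ u = σ w) : 2 ≤ load σ (σ u) :=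
  one_lt_card.2 ⟨u, by simp, w, by simp [h], huw⟩

theorem payment_of_notMem_exposed {v : G.V} {e : G.E} (he : e ∉ exposed k σ) (hσv : σ v ≠ e) :
    payment k σ e v = -if σ v ∈ exposed k σ then 3 - (load σ (σ v) : ℤ) else 0 := by
  rw [payment, if_neg hσv.symm, toll, if_neg he, zero_sub]

theorem payment_choice_of_notMem_exposed {v : G.V} (h : σ v ∉ exposed k σ) :
    payment k σ (σ v) v = 1 - 2 * #(G.incidentEdges v ∩ exposed k σ) := by
  have hinter : {f ∈ (G.incidentEdges v).erase (σ v) | f ∈ exposed k σ} =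
      G.incidentEdges v ∩ exposed k σ := by
    rw [filter_mem_eq_inter, erase_inter, erase_eq_of_notMem fun hmem => h (mem_inter.1 hmem).2]
  simp only [payment, if_pos, toll, if_neg h, sub_zero, ← hinter, card_filter, Nat.cast_sum,
    mul_sum]
  simp

theorem card_exposed_incident_lt {v : G.V} (hσ : G.IsSelector σ) (h : σ v ∉ exposed k σ) :
    #(G.incidentEdges v ∩ exposed k σ) < #(G.incidentEdges v) :=
  card_lt_card <| (ssubset_iff_of_subset inter_subset_left).2
    ⟨σ v, mem_incidentEdges.2 (hσ v), fun hmem => h (mem_inter.1 hmem).2⟩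

namespace IsOptimal

theorem le_payment_choice (hσ : IsOptimal k σ) {v : G.V} (hdeg : 3 ≤ G.deg v)
    (h : σ v ∈ exposed k σ) (hload : load σ (σ v) ≤ 2) :
    4 - (load σ (σ v) : ℤ) ≤ payment k σ (σ v) v := by
  have htoll : ∀ f ∈ (G.incidentEdges v).erase (σ v),
      toll k σ f v = (load σ (σ v) : ℤ) - 3 := fun f hf => by
    rw [mem_erase, mem_incidentEdges] at hf
    rw [toll, if_neg fun hfexp => hf.1 (hσ.eq_choice_of_mem_exposed hf.2 hfexp h), if_pos h]
    ring
  have hothers : (1 : ℤ) ≤ #((G.incidentEdges v).erase (σ v)) := by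
    have := deg_le_two_mul_card_incidentEdges v
    rw [card_erase_of_mem (mem_incidentEdges.2 (hσ.prop v))]
    omega
  rw [payment, if_pos rfl, sum_congr rfl htoll, sum_const, nsmul_eq_mul]
  have : (load σ (σ v) : ℤ) ≤ 2 := mod_cast hload
  nlinarith

theorem payment_of_mem_exposed (hσ : IsOptimal k σ) {v : G.V} {e : G.E} (hv : v ∈ G.ends e)
    (he : e ∈ exposed k σ) (hσv : σ v ≠ e) : payment k σ e v = 2 := by
  rw [payment, if_neg hσv.symm, toll, if_pos he,
    if_neg fun h => hσv (hσ.eq_choice_of_mem_exposed hv he h).symm, sub_zero]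

variable {e : G.E} {u w : G.V}

theorem seven_le_weight_of_ne (hσ : IsOptimal k σ) (hdeg : ∀ v, 3 ≤ G.deg v)
    (hends : G.ends e = s(u, w)) (huw : u ≠ w) (hk : 2 ≤ k e) (he : e ∈ exposed k σ) :
    7 ≤ weight k σ e := by
  rw [weight_of_ends_eq_of_ne k σ hends huw]
  have hload := load_eq_of_ends_eq hσ.prop hends
  have hpay : ∀ v ∈ G.ends e, (if σ v = e then 4 - (load σ e : ℤ) else 2) ≤ payment k σ e v := by
    intro v hv
    split_ifs with hσv
    · subst hσv
      exact hσ.le_payment_choice (hdeg v) he (by rw [hload]; split_ifs <;> omega)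
    · exact (hσ.payment_of_mem_exposed hv he hσv).ge
  have hu := hpay u (by simp [hends])
  have hw := hpay w (by simp [hends])
  obtain ⟨m, hm⟩ := mem_exposed.1 he
  simp only [ne_eq, huw, not_false_eq_true, true_and] at hload
  split_ifs at hload hu hw <;> omega

theorem weight_nonneg_of_load_zero (hσ : IsOptimal k σ) (hends : G.ends e = s(u, w)) (huw : u ≠ w)
    (hk : 2 ≤ k e) (he : e ∉ exposed k σ) (hu : σ u ≠ e) (hw : σ w ≠ e) :
    0 ≤ weight k σ e := by
  rw [weight_of_ends_eq_of_ne k σ hends huw, payment_of_notMem_exposed he hu,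
    payment_of_notMem_exposed he hw]
  have hu1 := one_le_load_choice σ u
  have hw1 := one_le_load_choice σ w
  split_ifs with hue hwe
  -- Otherwise moving both `u` and `w` to `e` would cover `σ u` and `σ w`.
  · have heq : σ u = σ w := hσ.eq_of_two_moves huw (e := e) (f := e) (by simp [hends])
      (by simp [hends]) hue hwe (by
        rw [symmDiff_right_comm _ ({e} : Finset G.E), symmDiff_symmDiff_cancel_right])
    have := two_le_load_choice huw heq
    rw [← heq]
    omega
  all_goals omega

theorem weight_nonneg_of_load_one (hσ : IsOptimal k σ) (hdeg : ∀ v, G.deg v ≤ 3)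
    (hends : G.ends e = s(u, w)) (huw : u ≠ w) (hk : 2 ≤ k e) (he : e ∉ exposed k σ)
    (hu : σ u = e) (hw : σ w ≠ e) : 0 ≤ weight k σ e := by
  have hk3 : 3 ≤ k e := by
    have hload := load_eq_of_ends_eq hσ.prop hends
    rw [mem_exposed, Nat.not_odd_iff_even, hload, if_pos hu, if_neg fun h => hw h.2] at he
    obtain ⟨m, hm⟩ := he
    omega
  rw [weight_of_ends_eq_of_ne k σ hends huw, payment_of_notMem_exposed he hw]
  subst hu
  rw [payment_choice_of_notMem_exposed he]
  have hw1 := one_le_load_choice σ w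
  split_ifs with hwe
  -- Otherwise moving `w` to `e` and `u` to `x` would cover `σ w` and `x`.
  · have hsub : G.incidentEdges u ∩ exposed k σ ⊆ {σ w} := fun x hx => by
      rw [mem_inter, mem_incidentEdges] at hx
      refine mem_singleton.2 (hσ.eq_of_two_moves huw.symm (e := σ u) (by simp [hends]) hx.1 hwe
        hx.2 ?_).symm
      rw [symmDiff_symmDiff_cancel_right]
    have := card_le_card hsub
    rw [card_singleton] at this
    omega
  · have := card_exposed_incident_lt hσ.prop he
    have := card_incidentEdges_le_deg u
    have := hdeg u
    omega

theorem weight_nonneg_of_load_two (hσ : IsOptimal k σ) (hdeg : ∀ v, G.deg v ≤ 3)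
    (hends : G.ends e = s(u, w)) (huw : u ≠ w) (hk : 2 ≤ k e) (he : e ∉ exposed k σ)
    (hu : σ u = e) (hw : σ w = e) : 0 ≤ weight k σ e := by
  have hpay : ∀ v, σ v = e → payment k σ e v = 1 - 2 * #(G.incidentEdges v ∩ exposed k σ) ∧
      #(G.incidentEdges v ∩ exposed k σ) ≤ 2 := by
    rintro v rfl
    have := card_exposed_incident_lt hσ.prop he
    have := card_incidentEdges_le_deg v
    have := hdeg v
    exact ⟨payment_choice_of_notMem_exposed he, by omega⟩
  have heq : ∀ x ∈ G.incidentEdges u ∩ exposed k σ, ∀ y ∈ G.incidentEdges w ∩ exposed k σ,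
      x = y := fun x hx y hy => by
    rw [mem_inter, mem_incidentEdges] at hx hy
    refine hσ.eq_of_two_moves huw hx.1 hy.1 hx.2 hy.2 ?_
    rw [hu, hw, symmDiff_right_comm _ ({x} : Finset G.E), symmDiff_self, bot_symmDiff]
  have hsum : #(G.incidentEdges u ∩ exposed k σ) + #(G.incidentEdges w ∩ exposed k σ) ≤ 2 := by
    obtain hx | ⟨x, hx⟩ := (G.incidentEdges u ∩ exposed k σ).eq_empty_or_nonempty
    · simpa [hx] using (hpay w hw).2
    obtain hy | ⟨y, hy⟩ := (G.incidentEdges w ∩ exposed k σ).eq_empty_or_nonempty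
    · simpa [hy] using (hpay u hu).2
    exact Nat.add_le_add (card_le_one.2 fun a ha b hb => (heq a ha y hy).trans (heq b hb y hy).symm)
      (card_le_one.2 fun a ha b hb => (heq x hx a ha).symm.trans (heq x hx b hb))
  rw [weight_of_ends_eq_of_ne k σ hends huw, (hpay u hu).1, (hpay w hw).1]
  omega

theorem weight_nonneg_of_ends_eq_diag (hσ : IsOptimal k σ) (hdeg : ∀ v, G.deg v ≤ 3)
    (hends : G.ends e = s(u, u)) (hk : 1 ≤ k e) (he : e ∉ exposed k σ) :
    0 ≤ weight k σ e := by
  rw [weight_of_ends_eq_diag k σ hends]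
  by_cases hu : σ u = e
  · subst hu
    have := card_exposed_incident_lt hσ.prop he
    have := card_incidentEdges_lt_deg_of_isLoop (hσ.prop u) ((isLoop_iff_of_ends_eq hends).2 rfl)
    have := hdeg u
    rw [payment_choice_of_notMem_exposed he]
    omega
  · have hload := load_eq_of_ends_eq hσ.prop hends
    have := one_le_load_choice σ u
    rw [payment_of_notMem_exposed he hu]
    rw [mem_exposed, Nat.not_odd_iff_even, hload, if_neg hu, if_neg fun h => h.1 rfl] at he
    obtain ⟨m, hm⟩ := he
    split_ifs <;> omega

theorem weight_nonneg (hσ : IsOptimal k σ) (hdeg : ∀ v, G.deg v ≤ 3)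
    (hkloop : ∀ e, G.IsLoop e → 1 ≤ k e) (hknonloop : ∀ e, ¬ G.IsLoop e → 2 ≤ k e)
    (he : e ∉ exposed k σ) : 0 ≤ weight k σ e := by
  obtain ⟨u, w, hends⟩ : ∃ u w, G.ends e = s(u, w) := Sym2.exists.1 ⟨_, rfl⟩
  have hloop := isLoop_iff_of_ends_eq hends
  obtain rfl | huw := eq_or_ne u w
  · exact hσ.weight_nonneg_of_ends_eq_diag hdeg hends (hkloop e (hloop.2 rfl)) he
  have hk := hknonloop e fun h => huw (hloop.1 h)
  by_cases hu : σ u = e <;> by_cases hw : σ w = e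
  · exact hσ.weight_nonneg_of_load_two hdeg hends huw hk he hu hw
  · exact hσ.weight_nonneg_of_load_one hdeg hends huw hk he hu hw
  · exact hσ.weight_nonneg_of_load_one hdeg (hends.trans Sym2.eq_swap) huw.symm hk he hw hu
  · exact hσ.weight_nonneg_of_load_zero hends huw hk he hu hw

theorem seven_le_weight (hσ : IsOptimal k σ) (hdeg : ∀ v, G.deg v = 3)
    (hknonloop : ∀ e, ¬ G.IsLoop e → 2 ≤ k e) (he : e ∈ exposed k σ) : 7 ≤ weight k σ e := by
  obtain ⟨u, w, hends⟩ : ∃ u w, G.ends e = s(u, w) := Sym2.exists.1 ⟨_, rfl⟩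
  have hloop := hσ.not_isLoop_of_mem_exposed hdeg he
  have huw : u ≠ w := fun h => hloop ((isLoop_iff_of_ends_eq hends).2 h)
  exact hσ.seven_le_weight_of_ne (fun v => (hdeg v).ge) hends huw (hknonloop e hloop) he

theorem seven_mul_card_exposed_le (hσ : IsOptimal k σ) (hdeg : ∀ v, G.deg v = 3)
    (hkloop : ∀ e, G.IsLoop e → 1 ≤ k e) (hknonloop : ∀ e, ¬ G.IsLoop e → 2 ≤ k e) :
    7 * #(exposed k σ) ≤ Fintype.card G.V + ∑ e, k e := by
  zify
  calc (7 * #(exposed k σ) : ℤ) = ∑ e ∈ exposed k σ, 7 := by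
        rw [sum_const, nsmul_eq_mul, mul_comm]
    _ ≤ ∑ e ∈ exposed k σ, weight k σ e :=
        sum_le_sum fun e he => hσ.seven_le_weight hdeg hknonloop he
    _ ≤ ∑ e, weight k σ e := sum_le_sum_of_subset_of_nonneg (subset_univ _) fun e _ he =>
        hσ.weight_nonneg (fun v => (hdeg v).le) hkloop hknonloop he
    _ = Fintype.card G.V + ∑ e, (k e : ℤ) := sum_weight k hσ.prop

end IsOptimal

/-! ### Matchings of the subdivided graph -/

theorem IsMatching.card_le_nu1 {M : Finset G.E} (hM : G.IsMatching M) : #M ≤ G.nu1 :=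
  le_csSup ⟨Fintype.card G.E, by rintro _ ⟨M, -, rfl⟩; exact card_le_univ M⟩ ⟨M, hM, rfl⟩

theorem card_subdivide_V (G : Multigraph) (fst snd : G.E → G.V) (k : G.E → ℕ) :
    Fintype.card (G.subdivide fst snd k).V = Fintype.card G.V + ∑ e, k e :=
  (Fintype.card_sum (α := G.V) (β := Σ e, Fin (k e))).trans (by simp)

variable {fst snd : G.E → G.V}

theorem inl_mem_subdivide_ends {v : G.V} {e : G.E} {i : Fin (k e + 1)} :
    (Sum.inl v : G.V ⊕ (Σ e, Fin (k e))) ∈ (G.subdivide fst snd k).ends ⟨e, i⟩ ↔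
      (i : ℕ) = 0 ∧ v = fst e ∨ (i : ℕ) = k e ∧ v = snd e := by
  refine (Sym2.mem_iff (α := G.V ⊕ (Σ e, Fin (k e)))).trans (or_congr ?_ ?_) <;>
    dsimp only <;> split_ifs with h <;> simp [h]

theorem inr_mem_subdivide_ends {e e' : G.E} {j : Fin (k e')} {i : Fin (k e + 1)} :
    (Sum.inr ⟨e', j⟩ : G.V ⊕ (Σ e, Fin (k e))) ∈ (G.subdivide fst snd k).ends ⟨e, i⟩ ↔
      e' = e ∧ ((j : ℕ) + 1 = i ∨ (j : ℕ) = i) := by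
  rw [and_or_left]
  refine (Sym2.mem_iff (α := G.V ⊕ (Σ e, Fin (k e)))).trans (or_congr ?_ ?_) <;>
    dsimp only <;> obtain rfl | he := eq_or_ne e' e <;> split_ifs with h <;>
    simp [Fin.ext_iff, *] <;> omega

/-- The matching of the subdivided graph in which every vertex `v` is matched along `σ v` and the
path replacing each edge `e` is matched greedily from `fst e` on. Its edges of odd index are
used, or those of even index if `fst e` chooses `e`, except that the edge at `snd e` is used only if
`snd e` chooses `e`; the vertex of a chosen loop is matched along the first edge of the path. -/
def selectorMatching (fst snd : G.E → G.V) (k : G.E → ℕ) (σ : G.V → G.E) :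
    Finset (Σ e, Fin (k e + 1)) :=
  {f | Odd ((f.2 : ℕ) + if σ (fst f.1) = f.1 then 1 else 0) ∧
    ((f.2 : ℕ) = k f.1 → fst f.1 ≠ snd f.1 ∧ σ (snd f.1) = f.1)}

theorem mem_selectorMatching {e : G.E} {i : Fin (k e + 1)} :
    ⟨e, i⟩ ∈ selectorMatching fst snd k σ ↔
      Odd ((i : ℕ) + if σ (fst e) = e then 1 else 0) ∧
        ((i : ℕ) = k e → fst e ≠ snd e ∧ σ (snd e) = e) := by
  simp [selectorMatching]

theorem choice_of_inl_mem_ends {v : G.V} {e : G.E} {i : Fin (k e + 1)}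
    (he : ⟨e, i⟩ ∈ selectorMatching fst snd k σ)
    (hv : (Sum.inl v : G.V ⊕ (Σ e, Fin (k e))) ∈ (G.subdivide fst snd k).ends ⟨e, i⟩) :
    σ v = e ∧ ((i : ℕ) = 0 ∧ v = fst e ∨ (i : ℕ) = k e ∧ v = snd e ∧ fst e ≠ snd e) := by
  rw [mem_selectorMatching] at he
  obtain ⟨hi, rfl⟩ | ⟨hi, rfl⟩ := inl_mem_subdivide_ends.1 hv
  · refine ⟨of_not_not fun h => ?_, .inl ⟨hi, rfl⟩⟩
    simp [hi, h] at he
  · exact ⟨(he.2 hi).2, .inr ⟨hi, rfl, (he.2 hi).1⟩⟩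

theorem not_isLoop_of_mem_selectorMatching {f : Σ e, Fin (k e + 1)}
    (hf : f ∈ selectorMatching fst snd k σ) : ¬ (G.subdivide fst snd k).IsLoop f := by
  obtain ⟨e, i⟩ := f
  rw [mem_selectorMatching] at hf
  refine (isLoop_iff_of_ends_eq (G := G.subdivide fst snd k) rfl).not.2 ?_
  split_ifs with h0 hk hk
  · exact fun h => (hf.2 hk).1 (Sum.inl_injective h)
  · exact not_false
  · exact not_false
  · intro h
    have := Sum.inr_injective h
    simp only [Sigma.mk.injEq, heq_eq_eq, Fin.mk.injEq, true_and] at this h0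
    omega

theorem isMatching_selectorMatching (fst snd : G.E → G.V) (k : G.E → ℕ) (σ : G.V → G.E) :
    (G.subdivide fst snd k).IsMatching (selectorMatching fst snd k σ) := by
  refine ⟨fun f => not_isLoop_of_mem_selectorMatching, ?_⟩
  rintro ⟨e, i⟩ he ⟨e', i'⟩ he' hne (v | ⟨f, j⟩) hv hv'
  · obtain ⟨rfl, hi⟩ := choice_of_inl_mem_ends he hv
    obtain ⟨rfl, hi'⟩ := choice_of_inl_mem_ends he' hv'
    refine hne (congrArg _ (Fin.ext ?_))
    grind
  · obtain ⟨rfl, hj⟩ := inr_mem_subdivide_ends.1 hv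
    obtain ⟨rfl, hj'⟩ := inr_mem_subdivide_ends.1 hv'
    have hodd := (mem_selectorMatching.1 he).1
    have hodd' := (mem_selectorMatching.1 he').1
    refine hne (congrArg _ (Fin.ext ?_))
    rw [Nat.odd_iff] at hodd hodd'
    omega

theorem half_le_card_selectorMatching_fiber (hσ : G.IsSelector σ) {e : G.E}
    (hends : G.ends e = s(fst e, snd e)) :
    (k e + load σ e) / 2 ≤ #{i : Fin (k e + 1) | ⟨e, i⟩ ∈ selectorMatching fst snd k σ} := by
  have hload := load_eq_of_ends_eq hσ hends
  set a := if σ (fst e) = e then 1 else 0 with ha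
  have ha1 : a ≤ 1 := by split_ifs at ha <;> omega
  have hidx (j : Fin ((k e + load σ e) / 2)) : 2 * (j : ℕ) + 1 - a < k e + 1 := by
    split_ifs at hload <;> omega
  calc (k e + load σ e) / 2 = #(univ : Finset (Fin ((k e + load σ e) / 2))) :=
        (card_fin _).symm
    _ ≤ _ := card_le_card_of_injOn (fun j => ⟨2 * j + 1 - a, hidx j⟩) (fun j _ => ?_) ?_
  · simp only [coe_filter, mem_univ, true_and, Set.mem_ofPred_eq, mem_selectorMatching, ← ha]
    refine ⟨⟨j, by omega⟩, fun hj => of_not_not fun h => ?_⟩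
    rw [if_neg h] at hload
    omega
  · intro j _ j' _ h
    simp only [Fin.mk.injEq] at h
    omega

theorem sum_half_le_nu1_subdivide (hσ : G.IsSelector σ) (hends : ∀ e, G.ends e = s(fst e, snd e)) :
    ∑ e, (k e + load σ e) / 2 ≤ (G.subdivide fst snd k).nu1 := by
  refine le_trans ?_ (isMatching_selectorMatching fst snd k σ).card_le_nu1
  calc ∑ e, (k e + load σ e) / 2
      ≤ ∑ e, #{i : Fin (k e + 1) | ⟨e, i⟩ ∈ selectorMatching fst snd k σ} :=
        sum_le_sum fun e _ => half_le_card_selectorMatching_fiber hσ (hends e)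
    _ = #(univ.sigma fun e => {i : Fin (k e + 1) | ⟨e, i⟩ ∈ selectorMatching fst snd k σ}) :=
        (card_sigma _ _).symm
    _ = #(selectorMatching fst snd k σ) := by congr 1; ext; simp

theorem card_subdivide_V_le (hσ : G.IsSelector σ) (hends : ∀ e, G.ends e = s(fst e, snd e)) :
    Fintype.card (G.subdivide fst snd k).V ≤
      2 * (G.subdivide fst snd k).nu1 + #(exposed k σ) := by
  have hsplit : ∀ e, k e + load σ e =
      2 * ((k e + load σ e) / 2) + if e ∈ exposed k σ then 1 else 0 := fun e => by
    simp only [mem_exposed, Nat.odd_iff]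
    split_ifs <;> omega
  calc Fintype.card (G.subdivide fst snd k).V
      = ∑ e, (k e + load σ e) := by rw [card_subdivide_V, sum_add_distrib, sum_load, add_comm]
    _ = 2 * ∑ e, (k e + load σ e) / 2 + #(exposed k σ) := by
        rw [sum_congr rfl fun e _ => hsplit e, sum_add_distrib, ← mul_sum, ← card_filter,
          filter_univ_mem]
    _ ≤ _ := by grw [sum_half_le_nu1_subdivide hσ hends]

end

theorem nu1_subdivide_ge_three_sevenths_general
    (G₀ : Multigraph) (fst snd : G₀.E → G₀.V)
    (hends : ∀ e : G₀.E, G₀.ends e = s(fst e, snd e)) (hcubic : ∀ v : G₀.V, G₀.deg v = 3)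
    (k : G₀.E → ℕ)
    (hkloop : ∀ e : G₀.E, G₀.IsLoop e → 1 ≤ k e)
    (hknonloop : ∀ e : G₀.E, ¬ G₀.IsLoop e → 2 ≤ k e) :
    7 * (G₀.subdivide fst snd k).nu1 ≥ 3 * Fintype.card (G₀.subdivide fst snd k).V := by
  obtain ⟨σ, hσ⟩ := exists_isOptimal k fun v => (hcubic v).trans_ne three_ne_zero
  have hmiss := card_subdivide_V_le (k := k) hσ.prop hends
  have hexposed := hσ.seven_mul_card_exposed_le hcubic hkloop hknonloop
  rw [← card_subdivide_V G₀ fst snd k] at hexposed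
  omega

/-- If G is obtained from a connected cubic pseudo-graph G₀ by subdividing
each edge e exactly k(e) times, with k(e) ≥ 1 for loops and k(e) ≥ 2 for non-loop edges,
then ν₁(G) ≥ (3/7)·|V(G)|. -/
theorem nu1_subdivide_ge_three_sevenths
    (G₀ : Multigraph) (fst snd : G₀.E → G₀.V)
    (hends : ∀ e : G₀.E, G₀.ends e = s(fst e, snd e))
    (hconn : G₀.Connected) (hcubic : ∀ v : G₀.V, G₀.deg v = 3)
    (k : G₀.E → ℕ)
    (hkloop : ∀ e : G₀.E, G₀.IsLoop e → 1 ≤ k e)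
    (hknonloop : ∀ e : G₀.E, ¬ G₀.IsLoop e → 2 ≤ k e) :
    7 * (G₀.subdivide fst snd k).nu1 ≥ 3 * Fintype.card (G₀.subdivide fst snd k).V :=
  nu1_subdivide_ge_three_sevenths_general G₀ fst snd hends hcubic k hkloop hknonloop

end Multigraph
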